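/- Let h > 0, α ∈ ℝ, λ > 0, F ∈ C¹(ℝ), and let Ψ ∈ C²(ℝ²) satisfy ∇·(K∇Ψ)(x) + F(Ψ(x) − (αλ/2)|x|²) = 0 for all x ∈ ℝ². Define W(x) = F(Ψ(x) − (αλ/2)|x|²), w(x,τ) = W(R_{ατ}x) and ψ(x,τ) = Ψ(R_{ατ}x). Then for every (x,τ) ∈ ℝ²×ℝ: (i) λ·∂_τw(x,τ) + ∇^⊥_xψ(x,τ)·∇_xw(x,τ) = 0, and (ii) −∇_x·(K(x)∇_xψ(x,τ)) = w(x,τ). In particular, the rotating ansatz reduces the helical transport–elliptic system to the semilinear elliptic equation for Ψ. -/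

import Mathlib

/-!
The field `K` is equivariant under rotations, `K (R x) = R K(x) Rᵀ` (which is where
`|R x| = |x|` enters), and `∇(Ψ ∘ R) = Rᵀ (∇Ψ ∘ R)`. The flux of `Ψ ∘ R` is therefore
`Rᵀ ((K∇Ψ) ∘ R)` (`flux_comp_rot`), and taking the divergence gives
`∇·(K∇(Ψ ∘ R)) = (∇·(K∇Ψ)) ∘ R` (`divK_comp_rot`). Evaluating the semilinear equation at `R x`
yields the elliptic equation.

For the transport equation put `y = R x`. Then `∂_τ w = α (y₀ ∂₁W - y₁ ∂₀W)(y)`, and the bracket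
`∂₁ψ ∂₀w - ∂₀ψ ∂₁w` is the one of `Ψ` and `W` at `y`, because `det R = 1`. Since
`∇W = F' · (∇Ψ - αλ y)`, the `F' ∇Ψ` part of `∇W` drops out of the bracket, and what remains
cancels `λ ∂_τ w`.
-/

noncomputable section

open Real

abbrev V2 := EuclideanSpace ℝ (Fin 2)

def mk2 (a b : ℝ) : V2 := (WithLp.equiv 2 (Fin 2 → ℝ)).symm ![a, b]

def pd (f : V2 → ℝ) (i : Fin 2) (x : V2) : ℝ :=
  fderiv ℝ f x (EuclideanSpace.single i 1)

def Kmat (h : ℝ) (x : V2) : Matrix (Fin 2) (Fin 2) ℝ :=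
  (h ^ 2 + x 0 ^ 2 + x 1 ^ 2)⁻¹ •
    !![h ^ 2 + x 1 ^ 2, -(x 0 * x 1); -(x 0 * x 1), h ^ 2 + x 0 ^ 2]

/-- divergence-form operator ∇·(K ∇Ψ). -/
def divK (h : ℝ) (Ψ : V2 → ℝ) (x : V2) : ℝ :=
  ∑ i, pd (fun y => ∑ j, Kmat h y i j * pd Ψ j y) i x

def rot (θ : ℝ) (x : V2) : V2 :=
  mk2 (Real.cos θ * x 0 - Real.sin θ * x 1) (Real.sin θ * x 0 + Real.cos θ * x 1)

lemma rot_apply_zero (θ : ℝ) (x : V2) : rot θ x 0 = cos θ * x 0 - sin θ * x 1 := by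
  simp [rot, mk2]

lemma rot_apply_one (θ : ℝ) (x : V2) : rot θ x 1 = sin θ * x 0 + cos θ * x 1 := by
  simp [rot, mk2]

lemma rot_eq (θ : ℝ) (x : V2) :
    rot θ x = (cos θ * x 0 - sin θ * x 1) • EuclideanSpace.single (0 : Fin 2) (1 : ℝ)
      + (sin θ * x 0 + cos θ * x 1) • EuclideanSpace.single (1 : Fin 2) (1 : ℝ) := by
  ext i
  fin_cases i <;> simp [rot, mk2]

lemma hasFDerivAt_coord (i : Fin 2) (x : V2) :
    HasFDerivAt (fun y : V2 => y i) (EuclideanSpace.proj i : V2 →L[ℝ] ℝ) x :=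
  (EuclideanSpace.proj i : V2 →L[ℝ] ℝ).hasFDerivAt

/-- The rotation `R_θ` as a continuous linear map. -/
def rotCLM (θ : ℝ) : V2 →L[ℝ] V2 :=
  LinearMap.toContinuousLinearMap
    { toFun := rot θ
      map_add' := fun x y => by
        ext i
        fin_cases i <;> simp [rot, mk2] <;> ring
      map_smul' := fun a x => by
        ext i
        fin_cases i <;> simp [rot, mk2] <;> ring }

lemma rotCLM_apply (θ : ℝ) (x : V2) : rotCLM θ x = rot θ x := rfl

lemma hasFDerivAt_rot (θ : ℝ) (x : V2) : HasFDerivAt (rot θ) (rotCLM θ) x :=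
  (rotCLM θ).hasFDerivAt

lemma pd_zero_comp_rot {f : V2 → ℝ} {θ : ℝ} {x : V2} (hf : DifferentiableAt ℝ f (rot θ x)) :
    pd (fun y => f (rot θ y)) 0 x
      = cos θ * pd f 0 (rot θ x) + sin θ * pd f 1 (rot θ x) := by
  have key := (hf.hasFDerivAt.comp x (hasFDerivAt_rot θ x)).fderiv
  simp only [Function.comp_def] at key
  simp only [pd, key, ContinuousLinearMap.comp_apply, rotCLM_apply]
  rw [rot_eq θ (EuclideanSpace.single 0 1)]
  simp

lemma pd_one_comp_rot {f : V2 → ℝ} {θ : ℝ} {x : V2} (hf : DifferentiableAt ℝ f (rot θ x)) :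
    pd (fun y => f (rot θ y)) 1 x
      = -sin θ * pd f 0 (rot θ x) + cos θ * pd f 1 (rot θ x) := by
  have key := (hf.hasFDerivAt.comp x (hasFDerivAt_rot θ x)).fderiv
  simp only [Function.comp_def] at key
  simp only [pd, key, ContinuousLinearMap.comp_apply, rotCLM_apply]
  rw [rot_eq θ (EuclideanSpace.single 1 1)]
  simp

lemma pd_linear_comb {f g : V2 → ℝ} {x : V2} (a b : ℝ) (i : Fin 2)
    (hf : DifferentiableAt ℝ f x) (hg : DifferentiableAt ℝ g x) :
    pd (fun y => a * f y + b * g y) i x = a * pd f i x + b * pd g i x := by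
  have key := ((hf.hasFDerivAt.const_mul a).add (hg.hasFDerivAt.const_mul b)).fderiv
  have e : (fun y => a * f y + b * g y) = (fun y => a * f y) + fun y => b * g y := rfl
  simp only [pd, e, key]
  simp

/-- The `i`-th component of the flux `K∇Ψ`, whose divergence is `divK`. -/
def flux (h : ℝ) (Ψ : V2 → ℝ) (i : Fin 2) (y : V2) : ℝ := ∑ j, Kmat h y i j * pd Ψ j y

lemma divK_eq_flux (h : ℝ) (Ψ : V2 → ℝ) (x : V2) :
    divK h Ψ x = pd (flux h Ψ 0) 0 x + pd (flux h Ψ 1) 1 x := by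
  rw [divK, Fin.sum_univ_two]
  rfl

lemma flux_differentiable {h : ℝ} (hh : 0 < h) {Ψ : V2 → ℝ} (hΨ : ContDiff ℝ 2 Ψ) (i : Fin 2) :
    Differentiable ℝ (flux h Ψ i) := by
  have hpd : ∀ j, Differentiable ℝ (pd Ψ j) := fun j =>
    ((hΨ.fderiv_right (m := 1) (by norm_num)).differentiable (by norm_num)).clm_apply
      (differentiable_const _)
  have hc : ∀ j : Fin 2, Differentiable ℝ fun y : V2 => y j := fun j y =>
    (hasFDerivAt_coord j y).differentiableAt
  have hden : Differentiable ℝ fun y : V2 => (h ^ 2 + y 0 ^ 2 + y 1 ^ 2)⁻¹ :=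
    (((hc 0).pow 2).const_add _ |>.add ((hc 1).pow 2)).inv fun y =>
      (show 0 < h ^ 2 + y 0 ^ 2 + y 1 ^ 2 by positivity).ne'
  have hK : ∀ j, Differentiable ℝ fun y : V2 => Kmat h y i j := by
    have h0 := hc 0
    have h1 := hc 1
    intro j
    fin_cases i <;> fin_cases j <;> simp [Kmat] <;> apply hden.mul <;> fun_prop
  unfold flux
  simp only [Fin.sum_univ_two]
  exact ((hK 0).mul (hpd 0)).add ((hK 1).mul (hpd 1))

/-- The flux of `Ψ ∘ R` is `Rᵀ` applied to the flux of `Ψ` at the rotated point. -/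
lemma flux_comp_rot (h : ℝ) {Ψ : V2 → ℝ} (hΨ : Differentiable ℝ Ψ) (θ : ℝ) (y : V2) :
    flux h (fun z => Ψ (rot θ z)) 0 y
        = cos θ * flux h Ψ 0 (rot θ y) + sin θ * flux h Ψ 1 (rot θ y) ∧
    flux h (fun z => Ψ (rot θ z)) 1 y
        = -sin θ * flux h Ψ 0 (rot θ y) + cos θ * flux h Ψ 1 (rot θ y) := by
  have hcs := sin_sq_add_cos_sq θ
  have hden : h ^ 2 + (cos θ * y 0 - sin θ * y 1) ^ 2 + (sin θ * y 0 + cos θ * y 1) ^ 2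
      = h ^ 2 + y 0 ^ 2 + y 1 ^ 2 := by
    linear_combination (y 0 ^ 2 + y 1 ^ 2) * hcs
  simp only [flux, Fin.sum_univ_two, pd_zero_comp_rot (hΨ _), pd_one_comp_rot (hΨ _)]
  simp only [Kmat, Matrix.smul_apply, Matrix.of_apply, Matrix.cons_val', Matrix.cons_val_zero,
    Matrix.cons_val_one, Matrix.cons_val_fin_one, smul_eq_mul, rot_apply_zero, rot_apply_one, hden]
  generalize (h ^ 2 + y 0 ^ 2 + y 1 ^ 2)⁻¹ = D
  generalize pd Ψ 0 (rot θ y) = p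
  generalize pd Ψ 1 (rot θ y) = q
  have hs : sin θ ^ 2 = 1 - cos θ ^ 2 := by linarith
  have hs3 : sin θ ^ 3 = sin θ * (1 - cos θ ^ 2) := by rw [← hs]; ring
  constructor <;> ring_nf <;> simp only [hs, hs3] <;> ring

lemma divK_comp_rot {h : ℝ} (hh : 0 < h) {Ψ : V2 → ℝ} (hΨ : ContDiff ℝ 2 Ψ) (θ : ℝ) (x : V2) :
    divK h (fun z => Ψ (rot θ z)) x = divK h Ψ (rot θ x) := by
  have hd : Differentiable ℝ Ψ := hΨ.differentiable (by norm_num)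
  have hG := fun i => flux_differentiable hh hΨ i
  have hGr : ∀ i, DifferentiableAt ℝ (fun y => flux h Ψ i (rot θ y)) x := fun i =>
    ((hG i _).hasFDerivAt.comp x (hasFDerivAt_rot θ x)).differentiableAt
  rw [divK_eq_flux, divK_eq_flux, funext fun y => (flux_comp_rot h hd θ y).1,
    funext fun y => (flux_comp_rot h hd θ y).2,
    pd_linear_comb _ _ _ (hGr 0) (hGr 1), pd_linear_comb _ _ _ (hGr 0) (hGr 1),
    pd_zero_comp_rot (hG 0 _), pd_zero_comp_rot (hG 1 _),
    pd_one_comp_rot (hG 0 _), pd_one_comp_rot (hG 1 _)]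
  linear_combination
    (pd (flux h Ψ 0) 0 (rot θ x) + pd (flux h Ψ 1) 1 (rot θ x)) * sin_sq_add_cos_sq θ

/-- Chain rule along the orbit `t ↦ R_{αt} x`, whose velocity at `y = R_{ατ} x` is
`α (-y₁, y₀)`. -/
lemma hasDerivAt_comp_orbit {f : V2 → ℝ} (α τ : ℝ) (x : V2)
    (hf : DifferentiableAt ℝ f (rot (α * τ) x)) :
    HasDerivAt (fun t => f (rot (α * t) x))
      (α * (rot (α * τ) x 0 * pd f 1 (rot (α * τ) x)
        - rot (α * τ) x 1 * pd f 0 (rot (α * τ) x))) τ := by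
  have hlin : HasDerivAt (fun t => α * t) α τ := by
    simpa using (hasDerivAt_id τ).const_mul α
  have hc := hlin.cos
  have hs := hlin.sin
  have horb := (((hc.mul_const (x 0)).sub (hs.mul_const (x 1))).smul_const
      (EuclideanSpace.single (0 : Fin 2) (1 : ℝ))).add
    (((hs.mul_const (x 0)).add (hc.mul_const (x 1))).smul_const
      (EuclideanSpace.single (1 : Fin 2) (1 : ℝ)))
  have horb' := horb.congr_of_eventuallyEq (f₁ := fun t => rot (α * t) x)
    (Filter.Eventually.of_forall fun t => rot_eq (α * t) x)
  have key := hf.hasFDerivAt.comp_hasDerivAt τ horb'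
  refine key.congr_deriv ?_
  simp only [map_add, map_smul, smul_eq_mul, rot_apply_zero, rot_apply_one, pd]
  ring

/-- Differentiability and gradient of `F (Ψ - (c/2)|·|²)`; the case `c = αλ` is `W`. -/
lemma pd_vorticity {F : ℝ → ℝ} (hF : Differentiable ℝ F) {Ψ : V2 → ℝ} (hΨ : Differentiable ℝ Ψ)
    (c : ℝ) (y : V2) :
    DifferentiableAt ℝ (fun x => F (Ψ x - c / 2 * ‖x‖ ^ 2)) y ∧
    ∀ i, pd (fun x => F (Ψ x - c / 2 * ‖x‖ ^ 2)) i y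
      = deriv F (Ψ y - c / 2 * ‖y‖ ^ 2) * (pd Ψ i y - c * y i) := by
  have hn := ((hasStrictFDerivAt_norm_sq y).hasFDerivAt).const_mul (c / 2)
  have key := (hF _).hasDerivAt.comp_hasFDerivAt y ((hΨ y).hasFDerivAt.sub hn)
  have key' : HasFDerivAt (fun x => F (Ψ x - c / 2 * ‖x‖ ^ 2)) _ y := key
  refine ⟨key'.differentiableAt, fun i => ?_⟩
  simp only [pd, key'.fderiv]
  simp [EuclideanSpace.inner_single_right]
  left
  ring

/-- The rigidly rotating ansatz w(x,τ) = W(R_{ατ}x), ψ(x,τ) = Ψ(R_{ατ}x)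
built from a solution Ψ of the semilinear elliptic equation ∇·(K∇Ψ) + F(Ψ − (αλ/2)|x|²) = 0
solves the helical transport–elliptic system λ∂_τw + ∇^⊥ψ·∇w = 0, −∇·(K∇ψ) = w. -/
theorem rotating_ansatz_solves_transport_elliptic
    (h α lam : ℝ) (hh : 0 < h) (hlam : 0 < lam)
    (F : ℝ → ℝ) (hF : ContDiff ℝ 1 F)
    (Ψ : V2 → ℝ) (hΨ : ContDiff ℝ 2 Ψ)
    (heq : ∀ x : V2, divK h Ψ x + F (Ψ x - α * lam / 2 * ‖x‖ ^ 2) = 0)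
    (W : V2 → ℝ) (hW : W = fun x => F (Ψ x - α * lam / 2 * ‖x‖ ^ 2))
    (w ψf : V2 → ℝ → ℝ)
    (hw : w = fun x τ => W (rot (α * τ) x))
    (hψ : ψf = fun x τ => Ψ (rot (α * τ) x)) :
    (∀ (x : V2) (τ : ℝ),
      lam * deriv (fun τ' => w x τ') τ
        + (pd (fun y => ψf y τ) 1 x * pd (fun y => w y τ) 0 x
            - pd (fun y => ψf y τ) 0 x * pd (fun y => w y τ) 1 x) = 0)
    ∧ (∀ (x : V2) (τ : ℝ), -divK h (fun y => ψf y τ) x = w x τ) := by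
  have hFd : Differentiable ℝ F := hF.differentiable (by norm_num)
  have hΨd : Differentiable ℝ Ψ := hΨ.differentiable (by norm_num)
  have hWd : Differentiable ℝ W := fun y => by
    rw [hW]
    exact (pd_vorticity hFd hΨd (α * lam) y).1
  have hWpd : ∀ i y, pd W i y
      = deriv F (Ψ y - α * lam / 2 * ‖y‖ ^ 2) * (pd Ψ i y - α * lam * y i) := fun i y => by
    rw [hW]
    exact (pd_vorticity hFd hΨd (α * lam) y).2 i
  subst hw hψ
  refine ⟨fun x τ => ?_, fun x τ => ?_⟩
  · simp only [(hasDerivAt_comp_orbit α τ x (hWd _)).deriv, pd_zero_comp_rot (hΨd _),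
      pd_one_comp_rot (hΨd _), pd_zero_comp_rot (hWd _), pd_one_comp_rot (hWd _), hWpd]
    generalize rot (α * τ) x = y
    generalize deriv F (Ψ y - α * lam / 2 * ‖y‖ ^ 2) = F'
    linear_combination (α * lam * F' * (pd Ψ 0 y * y 1 - pd Ψ 1 y * y 0))
      * sin_sq_add_cos_sq (α * τ)
  · simp only [divK_comp_rot hh hΨ, hW]
    linarith [heq (rot (α * τ) x)]
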